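/- arXiv:2405.09966 — 5 statements merged into one kernel-verified Lean document; each statement's English description precedes it below -/
import Mathlib

section
/- Let a, b, c > 0, ω ∈ ℝ, and s > 0 with s^a > |ω|. Then ∫_0^∞ e^{−s y} y^{b−1} M_{a,b}^c(−ω y^a) dy = s^{a c − b} / (s^a + ω)^c; equivalently, the Laplace transform of y ↦ y^{b−1} M_{a,b}^c(−ω y^a) at s is s^{a c − b}/(s^a + ω)^c. -/
open MeasureTheory

/-- The generalized (three-parameter) Mittag-Leffler function
`M_{a,b}^c(z) = Σ_{n=0}^∞ (c)_n z^n / (n! Γ(a n + b))`,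
where `(c)_n = c(c+1)⋯(c+n−1)` is the Pochhammer symbol. -/
noncomputable def genML (a b c z : ℝ) : ℝ :=
  ∑' n : ℕ, (ascPochhammer ℝ n).eval c * z ^ n / (n.factorial * Real.Gamma (a * n + b))

theorem hasSum_pochhammer (c x : ℝ) (hx : |x| < 1) :
    HasSum (fun n : ℕ => (ascPochhammer ℝ n).eval c / n.factorial * x ^ n)
      (1 / (1 - x) ^ c) := by
  have h := (Real.one_div_one_sub_rpow_hasFPowerSeriesOnBall_zero c).hasSum (y := x)
    (by simpa [enorm_eq_nnnorm, ← NNReal.coe_lt_coe] using hx)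
  simp only [zero_add] at h
  refine (congrArg (fun f : ℕ → ℝ => HasSum f (1 / (1 - x) ^ c)) (funext fun n => ?_)).mpr h
  have h1 := Ring.factorial_nsmul_multichoose_eq_ascPochhammer c n
  rw [Polynomial.ascPochhammer_smeval_eq_eval, Ring.multichoose_eq, nsmul_eq_mul] at h1
  have hf : (n.factorial : ℝ) ≠ 0 := by positivity
  rw [← h1]
  simp [FormalMultilinearSeries.ofScalars]
  field_simp
  exact Or.inl trivial

theorem integral_term (d s K : ℝ) (hd : 0 < d) (hs : 0 < s) :
    ∫ y in Set.Ioi (0 : ℝ), K / Real.Gamma d * (y ^ (d - 1) * Real.exp (-(s * y)))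
      = K * (1 / s) ^ d := by
  rw [integral_const_mul, Real.integral_rpow_mul_exp_neg_mul_Ioi hd hs]
  have := (Real.Gamma_pos_of_pos hd).ne'
  field_simp

theorem integrable_term (d s K : ℝ) (hd : 0 < d) (hs : 0 < s) :
    IntegrableOn (fun y : ℝ => K / Real.Gamma d * (y ^ (d - 1) * Real.exp (-(s * y))))
      (Set.Ioi 0) := by
  have h := integrableOn_rpow_mul_exp_neg_mul_rpow (p := 1) (s := d - 1) (b := s)
    (by linarith) one_pos hs
  simp only [Real.rpow_one, neg_mul] at h
  exact h.const_mul _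

/-- For `a, b, c > 0`, `ω ∈ ℝ` and `s > 0` with `s^a > |ω|`, the Laplace
transform of `y ↦ y^{b−1} M_{a,b}^c(−ω y^a)` at `s` equals `s^{ac−b}/(s^a + ω)^c`. -/
theorem laplace_transform_genML
    (a b c ω s : ℝ) (ha : 0 < a) (hb : 0 < b) (hc : 0 < c) (hs : 0 < s)
    (hsa : |ω| < s ^ a) :
    ∫ y in Set.Ioi (0 : ℝ),
        Real.exp (-s * y) * (y ^ (b - 1) * genML a b c (-ω * y ^ a)) =
      s ^ (a * c - b) / (s ^ a + ω) ^ c := by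
  have hsap : 0 < s ^ a := Real.rpow_pos_of_pos hs a
  have hpow : ∀ n : ℕ, (1 / s) ^ (a * n + b) = s ^ (-b) * (1 / s ^ a) ^ n := by
    intro n
    rw [one_div, Real.inv_rpow hs.le, Real.rpow_add hs, Real.rpow_mul hs.le, Real.rpow_natCast,
      Real.rpow_neg hs.le, one_div, inv_pow, mul_inv, mul_comm]
  have hd : ∀ n : ℕ, 0 < a * n + b := fun n => by positivity
  let P : ℕ → ℝ := fun n => (ascPochhammer ℝ n).eval c / n.factorial
  have hP : ∀ n, 0 ≤ P n := fun n =>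
    div_nonneg (ascPochhammer_pos n c hc).le (Nat.cast_nonneg _)
  let F : ℕ → ℝ → ℝ := fun n y => (P n * (-ω) ^ n) / Real.Gamma (a * n + b) *
    (y ^ (a * n + b - 1) * Real.exp (-(s * y)))
  have hint : ∀ n, IntegrableOn (F n) (Set.Ioi 0) := fun n =>
    integrable_term _ _ _ (hd n) hs
  have hval : ∀ n, ∫ y in Set.Ioi (0 : ℝ), F n y = s ^ (-b) * (P n * (-ω / s ^ a) ^ n) := by
    intro n
    rw [integral_term _ _ _ (hd n) hs, hpow]
    simp only [div_pow, one_pow]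
    ring
  have hnorm : ∀ n, ∫ y in Set.Ioi (0 : ℝ), ‖F n y‖ =
      s ^ (-b) * (P n * (|ω| / s ^ a) ^ n) := by
    intro n
    have h1 : ∫ y in Set.Ioi (0 : ℝ), ‖F n y‖ = ∫ y in Set.Ioi (0 : ℝ),
        (P n * |ω| ^ n) / Real.Gamma (a * n + b) *
          (y ^ (a * n + b - 1) * Real.exp (-(s * y))) := by
      refine setIntegral_congr_fun measurableSet_Ioi fun y hy => ?_
      have hy' : 0 < y := hy
      have hG := Real.Gamma_pos_of_pos (hd n)
      simp only [F, Real.norm_eq_abs, abs_mul, abs_div, abs_pow, abs_neg, abs_of_nonneg (hP n),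
        abs_of_pos hG, abs_of_pos (Real.rpow_pos_of_pos hy' _), Real.abs_exp]
    rw [h1, integral_term _ _ _ (hd n) hs, hpow]
    simp only [div_pow, one_pow]
    ring
  have hx1 : |(|ω| / s ^ a)| < 1 := by
    rw [abs_div, abs_abs, abs_of_pos hsap, div_lt_one hsap]
    exact hsa
  have hx2 : |-ω / s ^ a| < 1 := by
    rw [abs_div, abs_neg, abs_of_pos hsap, div_lt_one hsap]
    exact hsa
  have hsum : Summable fun n => ∫ y in Set.Ioi (0 : ℝ), ‖F n y‖ := by
    simp only [hnorm]
    exact (hasSum_pochhammer c _ hx1).summable.mul_left _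
  have key := hasSum_integral_of_summable_integral_norm hint hsum
  simp only [hval] at key
  have key2 := (hasSum_pochhammer c _ hx2).mul_left (s ^ (-b))
  have heq := key.unique key2
  have hL : ∫ y in Set.Ioi (0 : ℝ),
        Real.exp (-s * y) * (y ^ (b - 1) * genML a b c (-ω * y ^ a)) =
      ∫ y in Set.Ioi (0 : ℝ), ∑' n, F n y := by
    refine setIntegral_congr_fun measurableSet_Ioi fun y hy => ?_
    have hy' : 0 < y := hy
    simp only [genML]
    rw [← tsum_mul_left, ← tsum_mul_left]
    refine tsum_congr fun n => ?_
    have h2 : y ^ (a * n + b - 1) = y ^ (b - 1) * (y ^ a) ^ n := by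
      rw [show a * n + b - 1 = (b - 1) + a * n by ring, Real.rpow_add hy', Real.rpow_mul hy'.le,
        Real.rpow_natCast]
    have hG := (Real.Gamma_pos_of_pos (hd n)).ne'
    have hf : (n.factorial : ℝ) ≠ 0 := by positivity
    simp only [F, P, h2, mul_pow, neg_mul s y]
    field_simp
  rw [hL, heq]
  have hw : 0 < s ^ a + ω := by linarith [neg_abs_le ω]
  have h3 : 1 - -ω / s ^ a = (s ^ a + ω) / s ^ a := by field_simp; ring
  rw [h3, Real.div_rpow hw.le hsap.le, ← Real.rpow_mul hs.le, one_div_div,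
    sub_eq_add_neg, Real.rpow_add hs]
  ring
end

section
/- Let e, d, k > 0, w ∈ ℝ and t > 0. Then ∫_0^t y^{d−1} M_{e,d}^k(w y^e) (t−y)^{k−1} dy = Γ(k) · t^{d+k−1} · M_{e,d+k}^k(w t^e). -/
open MeasureTheory intervalIntegral

/-- Real scaled Beta integral. -/
lemma genML_aux_beta (p k t : ℝ) (hp : 0 < p) (hk : 0 < k) (ht : 0 < t) :
    ∫ y in (0 : ℝ)..t, y ^ (p - 1) * (t - y) ^ (k - 1) =
      t ^ (p + k - 1) * (Real.Gamma p * Real.Gamma k / Real.Gamma (p + k)) := by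
  have h := Complex.betaIntegral_scaled (p : ℂ) (k : ℂ) ht
  rw [Complex.betaIntegral_eq_Gamma_mul_div _ _ (by simpa) (by simpa)] at h
  have h2 : ∫ x in (0 : ℝ)..t, (x : ℂ) ^ ((p : ℂ) - 1) * ((t : ℂ) - x) ^ ((k : ℂ) - 1) =
      ∫ x in (0 : ℝ)..t, ((x ^ (p - 1) * (t - x) ^ (k - 1) : ℝ) : ℂ) := by
    apply intervalIntegral.integral_congr
    intro x hx
    rw [Set.uIcc_of_le ht.le] at hx
    simp only
    rw [Complex.ofReal_mul, Complex.ofReal_cpow hx.1, Complex.ofReal_cpow (sub_nonneg.2 hx.2)]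
    push_cast
    rfl
  rw [h2, intervalIntegral.integral_ofReal, ← Complex.ofReal_add, Complex.Gamma_ofReal,
    Complex.Gamma_ofReal, Complex.Gamma_ofReal, ← Complex.ofReal_one, ← Complex.ofReal_sub,
    ← Complex.ofReal_cpow ht.le] at h
  exact_mod_cast h

lemma genML_aux_integrable (p k t : ℝ) (hp : 0 < p) (hk : 0 < k) (ht : 0 < t) :
    IntervalIntegrable (fun y : ℝ => y ^ (p - 1) * (t - y) ^ (k - 1)) volume 0 t := by
  apply intervalIntegral.intervalIntegrable_of_integral_ne_zero
  rw [genML_aux_beta p k t hp hk ht]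
  have := Real.Gamma_pos_of_pos hp
  have := Real.Gamma_pos_of_pos hk
  have := Real.Gamma_pos_of_pos (add_pos hp hk)
  positivity

/-- Lower bound on Gamma. -/
lemma genML_aux_gamma (x R : ℝ) (hx : 1 ≤ x) (hR : 0 < R) :
    R ^ (x - 1) * Real.exp (-R) ≤ Real.Gamma x := by
  have hx0 : 0 < x := by linarith
  rw [Real.Gamma_eq_integral hx0, ← integral_exp_neg_Ioi R, ← MeasureTheory.integral_const_mul]
  have hint := Real.GammaIntegral_convergent hx0
  calc ∫ s in Set.Ioi R, R ^ (x - 1) * Real.exp (-s)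
      ≤ ∫ s in Set.Ioi R, Real.exp (-s) * s ^ (x - 1) := by
        apply setIntegral_mono_on
        · exact (integrableOn_exp_neg_Ioi R).const_mul _
        · exact hint.mono_set (Set.Ioi_subset_Ioi hR.le)
        · exact measurableSet_Ioi
        · intro s hs
          rw [mul_comm]
          have : R ≤ s := le_of_lt hs
          have : 0 ≤ x - 1 := by linarith
          gcongr
    _ ≤ _ := by
        apply setIntegral_mono_set hint
        · filter_upwards [ae_restrict_mem measurableSet_Ioi] with s hs
          have : (0 : ℝ) < s := hs
          simp only [Pi.zero_apply]
          positivity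
        · exact (Set.Ioi_subset_Ioi hR.le).eventuallyLE

lemma genML_aux_poch (k : ℝ) (hk : 0 < k) (n : ℕ) :
    (ascPochhammer ℝ n).eval k ≤ (k + 1) ^ n * n.factorial := by
  induction n with
  | zero => simp
  | succ n ih =>
    rw [ascPochhammer_succ_eval, Nat.factorial_succ, pow_succ]
    push_cast
    have h0 : (0 : ℝ) ≤ n := Nat.cast_nonneg n
    calc _ ≤ ((k + 1) ^ n * n.factorial) * ((k + 1) * (n + 1)) := by
          gcongr
          nlinarith [mul_nonneg hk.le h0]
      _ = _ := by ring

/-- Absolute convergence of the series. -/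
lemma genML_aux_summable (e b k z : ℝ) (he : 0 < e) (hk : 0 < k) :
    Summable fun n : ℕ =>
      (ascPochhammer ℝ n).eval k * z ^ n / (n.factorial * Real.Gamma (e * n + b)) := by
  set q : ℝ := (k + 1) * |z| with hq
  have hq0 : 0 ≤ q := by positivity
  set R : ℝ := (2 * q + 1) ^ (1 / e) with hRdef
  have hR : 0 < R := by positivity
  have hRe : R ^ e = 2 * q + 1 := by
    rw [hRdef, ← Real.rpow_mul (by positivity), one_div_mul_cancel he.ne', Real.rpow_one]
  have hg : Summable fun n : ℕ => (q / (2 * q + 1)) ^ n * (R ^ (b - 1) * Real.exp (-R))⁻¹ := by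
    apply Summable.mul_right
    apply summable_geometric_of_lt_one (by positivity)
    rw [div_lt_one (by positivity)]
    linarith
  apply Summable.of_norm_bounded_eventually_nat hg
  have htop : Filter.Tendsto (fun n : ℕ => e * (n : ℝ) + b) Filter.atTop Filter.atTop :=
    Filter.tendsto_atTop_add_const_right _ _
      (tendsto_natCast_atTop_atTop.const_mul_atTop he)
  filter_upwards [htop.eventually_ge_atTop 1] with n hn
  have hG := genML_aux_gamma _ R hn hR
  have hpow : R ^ (e * n + b - 1) = (2 * q + 1) ^ n * R ^ (b - 1) := by
    rw [add_sub_assoc, Real.rpow_add hR, Real.rpow_mul hR.le, hRe, Real.rpow_natCast]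
  rw [hpow] at hG
  have hGpos : 0 < Real.Gamma (e * n + b) := Real.Gamma_pos_of_pos (by linarith)
  have hP := genML_aux_poch k hk n
  have hP0 := ascPochhammer_pos n k hk
  have hf : (0 : ℝ) < n.factorial := by positivity
  rw [Real.norm_eq_abs, abs_div, abs_mul, abs_mul, abs_of_pos hP0, abs_of_pos hf,
    abs_of_pos hGpos, abs_pow]
  calc _ ≤ ((k + 1) ^ n * n.factorial) * |z| ^ n /
        (n.factorial * ((2 * q + 1) ^ n * R ^ (b - 1) * Real.exp (-R))) := by
        gcongr
    _ = _ := by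
        rw [hq, div_pow, mul_pow]
        field_simp

/-- For `e, d, k > 0`, `w ∈ ℝ` and `t > 0`,
`∫_0^t y^{d−1} M_{e,d}^k(w y^e) (t−y)^{k−1} dy = Γ(k) t^{d+k−1} M_{e,d+k}^k(w t^e)`. -/
theorem genML_convolution_integral
    (e d k w t : ℝ) (he : 0 < e) (hd : 0 < d) (hk : 0 < k) (ht : 0 < t) :
    ∫ y in (0 : ℝ)..t, y ^ (d - 1) * genML e d k (w * y ^ e) * (t - y) ^ (k - 1) =
      Real.Gamma k * t ^ (d + k - 1) * genML e (d + k) k (w * t ^ e) := by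
  have hterm : ∀ n : ℕ, 0 < e * n + d := fun n => by positivity
  set a : ℕ → ℝ := fun n => (ascPochhammer ℝ n).eval k * w ^ n /
    (n.factorial * Real.Gamma (e * n + d)) with ha
  have hint : ∀ n : ℕ, Integrable
      (fun y : ℝ => a n * (y ^ (e * n + d - 1) * (t - y) ^ (k - 1)))
      (volume.restrict (Set.Ioc 0 t)) := fun n =>
    ((intervalIntegrable_iff_integrableOn_Ioc_of_le ht.le).1
      (genML_aux_integrable _ k t (hterm n) hk ht)).const_mul _
  have hval : ∀ n : ℕ, ∫ y in Set.Ioc 0 t, y ^ (e * n + d - 1) * (t - y) ^ (k - 1) =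
      t ^ (e * n + d + k - 1) *
        (Real.Gamma (e * n + d) * Real.Gamma k / Real.Gamma (e * n + d + k)) := fun n => by
    rw [← intervalIntegral.integral_of_le ht.le, genML_aux_beta _ k t (hterm n) hk ht]
  have hG : ∀ n : ℕ, Real.Gamma (e * n + d) ≠ 0 := fun n =>
    (Real.Gamma_pos_of_pos (hterm n)).ne'
  have hpw : ∀ n : ℕ, t ^ (e * n + d + k - 1) = t ^ (d + k - 1) * (t ^ e) ^ n := fun n => by
    rw [← Real.rpow_natCast (t ^ e), ← Real.rpow_mul ht.le, ← Real.rpow_add ht]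
    congr 1
    ring
  have hI : ∀ n : ℕ, a n * ∫ y in Set.Ioc 0 t, y ^ (e * n + d - 1) * (t - y) ^ (k - 1) =
      Real.Gamma k * t ^ (d + k - 1) * ((ascPochhammer ℝ n).eval k * (w * t ^ e) ^ n /
        (n.factorial * Real.Gamma (e * n + (d + k)))) := fun n => by
    have h1 := hG n
    have h2 : Real.Gamma (e * n + (d + k)) ≠ 0 :=
      (Real.Gamma_pos_of_pos (by have := hterm n; linarith)).ne'
    rw [hval, hpw, ha, mul_pow, add_assoc (e * n) d k]
    field_simp
  have hsum : Summable fun n : ℕ => ∫ y in Set.Ioc 0 t,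
      ‖a n * (y ^ (e * n + d - 1) * (t - y) ^ (k - 1))‖ := by
    have hs := ((genML_aux_summable e (d + k) k (w * t ^ e) he hk).mul_left
      (Real.Gamma k * t ^ (d + k - 1))).norm
    refine hs.congr fun n => ?_
    rw [← hI, norm_mul]
    simp_rw [norm_mul (a n)]
    rw [MeasureTheory.integral_const_mul]
    congr 1
    rw [Real.norm_of_nonneg]
    · refine setIntegral_congr_fun measurableSet_Ioc fun y hy => ?_
      have h1 : 0 < y := hy.1
      have h2 : 0 ≤ t - y := sub_nonneg.2 hy.2
      exact (Real.norm_of_nonneg (by positivity)).symm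
    · refine setIntegral_nonneg measurableSet_Ioc fun y hy => ?_
      have h1 : 0 < y := hy.1
      have h2 : 0 ≤ t - y := sub_nonneg.2 hy.2
      positivity
  have hmain := integral_tsum_of_summable_integral_norm hint hsum
  simp_rw [MeasureTheory.integral_const_mul, hI] at hmain
  rw [tsum_mul_left] at hmain
  unfold genML
  rw [hmain, intervalIntegral.integral_of_le ht.le]
  refine setIntegral_congr_fun measurableSet_Ioc fun y hy => ?_
  have h1 : 0 < y := hy.1
  rw [← tsum_mul_left, ← tsum_mul_right]
  refine tsum_congr fun n => ?_
  have : y ^ (e * n + d - 1) = y ^ (d - 1) * (y ^ e) ^ n := by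
    rw [← Real.rpow_natCast (y ^ e), ← Real.rpow_mul h1.le, ← Real.rpow_add h1]
    congr 1
    ring
  rw [this, ha, mul_pow]
  ring
end

section
/- Let β ∈ (0,1), ν ≥ 0, ω ∈ ℝ and t > 0. Then ∫_0^t e^{−ν u} u^{β−1} M_{β,β}(ω u^β) du = e^{−ν t} Σ_{m=0}^∞ ν^m t^{β+m} M_{β, β+m+1}(ω t^β), where both the integral and the series converge absolutely. -/
open MeasureTheory intervalIntegral

/-- The two-parameter Mittag-Leffler function `M_{a,b}(z) = Σ_{n=0}^∞ z^n / Γ(a n + b)`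
(the three-parameter function `M_{a,b}^c` with `c = 1`). -/
noncomputable def ML (a b z : ℝ) : ℝ :=
  ∑' n : ℕ, z ^ n / Real.Gamma (a * n + b)

lemma ML_gamma_lower {x R : ℝ} (hx : 1 ≤ x) (hR : 0 < R) :
    R ^ (x - 1) * Real.exp (-R) ≤ Real.Gamma x := by
  have hx0 : 0 < x := by linarith
  have hI := Real.GammaIntegral_convergent hx0
  have hsub : Set.Ioi R ⊆ Set.Ioi (0:ℝ) := Set.Ioi_subset_Ioi hR.le
  rw [Real.Gamma_eq_integral hx0, ← integral_exp_neg_Ioi R, ← MeasureTheory.integral_const_mul]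
  calc ∫ u in Set.Ioi R, R ^ (x - 1) * Real.exp (-u)
      ≤ ∫ u in Set.Ioi R, Real.exp (-u) * u ^ (x - 1) := by
        refine setIntegral_mono_on ?_ (hI.mono_set hsub) measurableSet_Ioi ?_
        · exact (integrableOn_exp_neg_Ioi R).const_mul _
        · intro u hu
          have hu' : R < u := hu
          rw [mul_comm]
          gcongr
    _ ≤ _ := by
        refine setIntegral_mono_set hI ?_ (Filter.Eventually.of_forall hsub)
        filter_upwards [ae_restrict_mem measurableSet_Ioi] with u hu
        have hu' : 0 < u := hu
        positivity

lemma ML_summable {a b : ℝ} (ha : 0 < a) (z : ℝ) :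
    Summable (fun n : ℕ => |z ^ n / Real.Gamma (a * n + b)|) := by
  set q : ℝ := 2 * (|z| + 1) with hq
  have hq0 : 0 < q := by positivity
  set R : ℝ := q ^ (1 / a) with hR
  have hR0 : 0 < R := by positivity
  have hRa : R ^ a = q := by
    rw [hR, ← Real.rpow_mul hq0.le, one_div, inv_mul_cancel₀ ha.ne', Real.rpow_one]
  have hg : Summable (fun n : ℕ => (Real.exp R * R ^ (1 - b)) * (|z| / q) ^ n) := by
    refine (summable_geometric_of_lt_one (by positivity) ?_).mul_left _
    rw [div_lt_one hq0]
    have := abs_nonneg z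
    linarith
  refine Summable.of_norm_bounded_eventually_nat hg ?_
  obtain ⟨N, hN⟩ := exists_nat_ge ((1 - b) / a)
  filter_upwards [Filter.eventually_ge_atTop N] with n hn
  have h1 : 1 ≤ a * n + b := by
    have : (1 - b) / a ≤ n := hN.trans (by exact_mod_cast hn)
    rw [div_le_iff₀ ha] at this
    linarith
  have hG := ML_gamma_lower h1 hR0
  have hGp : 0 < Real.Gamma (a * n + b) := Real.Gamma_pos_of_pos (by linarith)
  have e1 : R ^ (a * n + b - 1) = q ^ n * R ^ (b - 1) := by
    rw [show a * n + b - 1 = a * n + (b - 1) by ring, Real.rpow_add hR0, Real.rpow_mul hR0.le, hRa,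
      Real.rpow_natCast]
  rw [Real.norm_eq_abs, abs_abs, abs_div, abs_pow, abs_of_pos hGp]
  calc |z| ^ n / Real.Gamma (a * n + b)
      ≤ |z| ^ n / (R ^ (a * n + b - 1) * Real.exp (-R)) := by gcongr
    _ = _ := by
      rw [e1, Real.exp_neg, show (1 - b) = -(b - 1) by ring, Real.rpow_neg hR0.le, div_pow]
      field_simp

lemma ML_gamma_fact {x : ℝ} (hx : 0 ≤ x) (m : ℕ) :
    Real.Gamma (x + 1) * (m.factorial : ℝ) ≤ Real.Gamma (x + m + 1) := by
  induction m with
  | zero => simp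
  | succ k ih =>
    have h : Real.Gamma (x + (k + 1 : ℕ) + 1) = (x + k + 1) * Real.Gamma (x + k + 1) := by
      rw [← Real.Gamma_add_one (by positivity)]
      congr 1
      push_cast
      ring
    rw [h, Nat.factorial_succ]
    push_cast
    have hp : 0 < Real.Gamma (x + 1) := Real.Gamma_pos_of_pos (by positivity)
    calc Real.Gamma (x + 1) * (((k : ℝ) + 1) * (k.factorial : ℝ))
        = (k + 1) * (Real.Gamma (x + 1) * (k.factorial : ℝ)) := by ring
      _ ≤ (x + k + 1) * Real.Gamma (x + k + 1) := by
        gcongr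
        linarith

lemma ML_beta {s t : ℝ} (hs : 0 < s) (ht : 0 < t) (m : ℕ) :
    ∫ u in (0:ℝ)..t, u ^ (s - 1) * (t - u) ^ m =
      t ^ (s + m) * (Real.Gamma s * (m.factorial : ℝ) / Real.Gamma (s + m + 1)) := by
  have h := Complex.betaIntegral_scaled (s : ℂ) ((m : ℂ) + 1) ht
  rw [Complex.betaIntegral_eq_Gamma_mul_div _ _ (by simpa using hs)
    (by simp; positivity)] at h
  have e : ∫ x in (0:ℝ)..t, (x : ℂ) ^ ((s : ℂ) - 1) * ((t : ℂ) - x) ^ ((m : ℂ) + 1 - 1) =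
      ((∫ u in (0:ℝ)..t, u ^ (s - 1) * (t - u) ^ m : ℝ) : ℂ) := by
    rw [← intervalIntegral.integral_ofReal]
    refine intervalIntegral.integral_congr fun u hu => ?_
    rw [Set.uIcc_of_le ht.le] at hu
    simp only [add_sub_cancel_right, Complex.cpow_natCast]
    push_cast
    rw [Complex.ofReal_cpow hu.1]
    push_cast
    rfl
  rw [e, Complex.Gamma_nat_eq_factorial, Complex.Gamma_ofReal,
    show (s : ℂ) + ((m : ℂ) + 1) = ((s + m + 1 : ℝ) : ℂ) by push_cast; ring, Complex.Gamma_ofReal,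
    show ((s + m + 1 : ℝ) : ℂ) - 1 = ((s + m : ℝ) : ℂ) by push_cast; ring,
    ← Complex.ofReal_cpow ht.le] at h
  exact_mod_cast h

/-- Double-indexed integrand. -/
noncomputable def MLF (β ν ω t : ℝ) (p : ℕ × ℕ) (u : ℝ) : ℝ :=
  Real.exp (-ν * t) * (((ν * (t - u)) ^ p.1 / (p.1.factorial : ℝ)) *
    (u ^ (β - 1) * ((ω * u ^ β) ^ p.2 / Real.Gamma (β * p.2 + β))))

/-- Double-indexed coefficients. -/
noncomputable def MLa (β ν ω t : ℝ) (p : ℕ × ℕ) : ℝ :=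
  ν ^ p.1 * t ^ (β + (p.1 : ℝ)) * ((ω * t ^ β) ^ p.2 / Real.Gamma (β * p.2 + (β + p.1 + 1)))

lemma MLF_eq {β ν ω t u : ℝ} (hu : 0 < u) (p : ℕ × ℕ) :
    MLF β ν ω t p u = (Real.exp (-ν * t) * ν ^ p.1 / (p.1.factorial : ℝ) * ω ^ p.2 /
      Real.Gamma (β * p.2 + β)) * (u ^ ((β * p.2 + β) - 1) * (t - u) ^ p.1) := by
  have : u ^ ((β * p.2 + β) - 1) = u ^ (β - 1) * (u ^ β) ^ p.2 := by
    rw [← Real.rpow_natCast, ← Real.rpow_mul hu.le, ← Real.rpow_add hu]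
    congr 1
    ring
  rw [this, MLF, mul_pow, mul_pow]
  ring

lemma MLF_integral {β ν ω t : ℝ} (hβ : 0 < β) (ht : 0 < t) (p : ℕ × ℕ) :
    ∫ u in Set.Ioc 0 t, MLF β ν ω t p u = Real.exp (-ν * t) * MLa β ν ω t p := by
  rw [setIntegral_congr_fun measurableSet_Ioc (fun u hu => MLF_eq hu.1 p), MeasureTheory.integral_const_mul,
    ← intervalIntegral.integral_of_le ht.le, ML_beta (by positivity) ht, MLa]
  have h1 : Real.Gamma (β * p.2 + β) ≠ 0 := (Real.Gamma_pos_of_pos (by positivity)).ne'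
  have h2 : (p.1.factorial : ℝ) ≠ 0 := by positivity
  have h3 : t ^ (β * p.2 + β + p.1) = t ^ (β + (p.1 : ℝ)) * (t ^ β) ^ p.2 := by
    rw [← Real.rpow_natCast, ← Real.rpow_mul ht.le, ← Real.rpow_add ht]
    congr 1
    ring
  rw [h3, mul_pow, show β * p.2 + β + (p.1 : ℝ) + 1 = β * p.2 + (β + p.1 + 1) by ring]
  field_simp

lemma MLF_integrable {β ν ω t : ℝ} (hβ : 0 < β) (ht : 0 < t) (p : ℕ × ℕ) :
    IntegrableOn (MLF β ν ω t p) (Set.Ioc 0 t) := by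
  refine IntegrableOn.congr_fun ?_ (fun u hu => (MLF_eq hu.1 p).symm) measurableSet_Ioc
  refine Integrable.const_mul ?_ _
  have h : IntervalIntegrable (fun u : ℝ => u ^ ((β * p.2 + β) - 1) * (t - u) ^ p.1) volume 0 t := by
    refine IntervalIntegrable.mul_continuousOn ?_ (by fun_prop)
    refine intervalIntegral.intervalIntegrable_rpow' ?_
    have : 0 < β * p.2 + β := by positivity
    linarith
  exact (intervalIntegrable_iff_integrableOn_Ioc_of_le ht.le).1 h

lemma MLF_norm {β ν ω t : ℝ} (hβ : 0 < β) (hν : 0 ≤ ν) (p : ℕ × ℕ) {u : ℝ}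
    (hu : u ∈ Set.Ioc 0 t) : ‖MLF β ν ω t p u‖ = MLF β ν |ω| t p u := by
  have h1 : 0 < Real.Gamma (β * p.2 + β) := Real.Gamma_pos_of_pos (by positivity)
  have h2 : 0 ≤ ν * (t - u) := mul_nonneg hν (by linarith [hu.2])
  have h3 : 0 < u ^ β := Real.rpow_pos_of_pos hu.1 _
  have h4 : 0 < u ^ (β - 1) := Real.rpow_pos_of_pos hu.1 _
  simp only [MLF, Real.norm_eq_abs, abs_mul, abs_div, abs_pow, abs_of_pos h1, abs_of_pos h3,
    abs_of_pos h4, Real.abs_exp, Nat.abs_cast]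
  rw [← abs_mul, abs_of_nonneg h2]

lemma MLa_summable {β ν ω t : ℝ} (hβ : 0 < β) (hν : 0 ≤ ν) (ht : 0 < t) :
    Summable (MLa β ν ω t) := by
  have h1 : Summable (fun m : ℕ => (ν * t) ^ m / (m.factorial : ℝ)) :=
    Real.summable_pow_div_factorial _
  have h2 := (ML_summable (b := β + 1) hβ (ω * t ^ β)).mul_left (t ^ β)
  have h3 := h1.mul_of_nonneg h2 (fun m => by positivity) (fun n => by positivity)
  refine Summable.of_norm_bounded h3 ?_
  rintro ⟨m, n⟩
  have hG := ML_gamma_fact (x := β * n + β) (by positivity) m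
  have hGp : 0 < Real.Gamma (β * n + β + 1) := Real.Gamma_pos_of_pos (by positivity)
  have hGp' : 0 < Real.Gamma (β * n + β + m + 1) := Real.Gamma_pos_of_pos (by positivity)
  simp only [MLa]
  rw [show β * n + (β + m + 1) = β * n + β + m + 1 by ring,
    show β * n + (β + 1) = β * n + β + 1 by ring, Real.norm_eq_abs, abs_mul, abs_mul, abs_div,
    abs_div, abs_of_pos hGp, abs_of_pos hGp', abs_of_nonneg (pow_nonneg hν m),
    abs_of_pos (Real.rpow_pos_of_pos ht _), Real.rpow_add ht, Real.rpow_natCast]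
  calc ν ^ m * (t ^ β * t ^ m) * (|(ω * t ^ β) ^ n| / Real.Gamma (β * n + β + m + 1))
      ≤ ν ^ m * (t ^ β * t ^ m) * (|(ω * t ^ β) ^ n| /
        (Real.Gamma (β * n + β + 1) * (m.factorial : ℝ))) := by gcongr
    _ = _ := by
      rw [mul_pow ν t]
      field_simp

lemma MLF_tsum {β ν ω t : ℝ} (hβ : 0 < β) (u : ℝ) :
    ∑' p, MLF β ν ω t p u = Real.exp (-ν * u) * u ^ (β - 1) * ML β β (ω * u ^ β) := by
  have h1 : Summable (fun m : ℕ => ‖(ν * (t - u)) ^ m / (m.factorial : ℝ)‖) :=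
    (Real.summable_pow_div_factorial _).norm
  have h2 : Summable (fun n : ℕ => ‖u ^ (β - 1) *
      ((ω * u ^ β) ^ n / Real.Gamma (β * n + β))‖) := by
    simp only [norm_mul]
    exact (ML_summable hβ _).mul_left _
  have hexp : ∑' m : ℕ, (ν * (t - u)) ^ m / (m.factorial : ℝ) = Real.exp (ν * (t - u)) := by
    rw [Real.exp_eq_exp_ℝ, NormedSpace.exp_eq_tsum_div]
  have h3 := tsum_mul_tsum_of_summable_norm h1 h2
  simp only [MLF]
  rw [tsum_mul_left, ← h3, tsum_mul_left, hexp, ← mul_assoc, ← Real.exp_add, ML,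
    show -ν * t + ν * (t - u) = -ν * u by ring]
  ring

lemma ML_continuousOn {β ω t : ℝ} (hβ : 0 < β) :
    ContinuousOn (fun u : ℝ => ML β β (ω * u ^ β)) (Set.Icc 0 t) := by
  unfold ML
  refine continuousOn_tsum (u := fun n : ℕ => |(ω * t ^ β) ^ n / Real.Gamma (β * n + β)|) ?_
    (ML_summable hβ _) ?_
  · intro n
    have : Continuous (fun u : ℝ => u ^ β) := Real.continuous_rpow_const hβ.le
    exact Continuous.continuousOn (by fun_prop)
  · intro n u hu
    have h0 : 0 ≤ u := hu.1
    have h1 : u ≤ t := hu.2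
    have h2 : 0 ≤ u ^ β := Real.rpow_nonneg h0 _
    have h3 : 0 ≤ t ^ β := Real.rpow_nonneg (h0.trans h1) _
    rw [Real.norm_eq_abs, abs_div, abs_div, abs_pow, abs_pow, abs_mul, abs_mul, abs_of_nonneg h2,
      abs_of_nonneg h3]
    gcongr

/-- For `β ∈ (0,1)`, `ν ≥ 0`, `ω ∈ ℝ` and `t > 0`,
`∫_0^t e^{−ν u} u^{β−1} M_{β,β}(ω u^β) du = e^{−ν t} Σ_{m=0}^∞ ν^m t^{β+m} M_{β,β+m+1}(ω t^β)`,
where both the integral and the series converge absolutely. -/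
theorem integral_ML_eq_tsum
    (β ν ω t : ℝ) (hβ : β ∈ Set.Ioo (0 : ℝ) 1) (hν : 0 ≤ ν) (ht : 0 < t) :
    IntegrableOn (fun u : ℝ => Real.exp (-ν * u) * u ^ (β - 1) * ML β β (ω * u ^ β))
        (Set.Ioc 0 t) ∧
    Summable (fun m : ℕ =>
        |ν ^ m * t ^ (β + (m : ℝ)) * ML β (β + m + 1) (ω * t ^ β)|) ∧
    ∫ u in (0 : ℝ)..t, Real.exp (-ν * u) * u ^ (β - 1) * ML β β (ω * u ^ β) =
      Real.exp (-ν * t) *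
        ∑' m : ℕ, ν ^ m * t ^ (β + (m : ℝ)) * ML β (β + m + 1) (ω * t ^ β) := by
  have hb : 0 < β := hβ.1
  have hsum : Summable (MLa β ν ω t) := MLa_summable hb hν ht
  have hrow : ∀ m : ℕ, ∑' n : ℕ, MLa β ν ω t (m, n) =
      ν ^ m * t ^ (β + (m : ℝ)) * ML β (β + m + 1) (ω * t ^ β) := by
    intro m
    simp only [MLa]
    rw [tsum_mul_left, ML]
  refine ⟨?_, ?_, ?_⟩
  · have h : IntervalIntegrable
        (fun u : ℝ => u ^ (β - 1) * (Real.exp (-ν * u) * ML β β (ω * u ^ β))) volume 0 t := by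
      refine IntervalIntegrable.mul_continuousOn
        (intervalIntegral.intervalIntegrable_rpow' (by linarith)) ?_
      rw [Set.uIcc_of_le ht.le]
      exact ContinuousOn.mul (by fun_prop) (ML_continuousOn hb)
    refine ((intervalIntegrable_iff_integrableOn_Ioc_of_le ht.le).1 h).congr_fun ?_
      measurableSet_Ioc
    intro u _
    simp only
    ring
  · have h := hsum.prod
    simp only [hrow] at h
    exact h.abs
  · have hF := integral_tsum_of_summable_integral_norm (μ := volume.restrict (Set.Ioc 0 t))
      (F := MLF β ν ω t) (fun p => MLF_integrable hb ht p) (by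
        have : ∀ p, ∫ u in Set.Ioc 0 t, ‖MLF β ν ω t p u‖ =
            Real.exp (-ν * t) * MLa β ν |ω| t p := by
          intro p
          rw [← MLF_integral hb ht p]
          exact setIntegral_congr_fun measurableSet_Ioc (fun u hu => MLF_norm hb hν p hu)
        simp only [this]
        exact (MLa_summable hb hν ht).mul_left _)
    simp only [MLF_integral hb ht, MLF_tsum hb] at hF
    rw [intervalIntegral.integral_of_le ht.le, ← hF, tsum_mul_left, hsum.tsum_prod]
    simp only [hrow]
end

section
/- Let β ∈ (0,1), ν > 0, γ > 0, and let s > 0 satisfy (s+ν)^β > |ν^β − γ|. Then ∫_0^∞ e^{−s y} e^{−ν y} y^{β−1} M_{β,β}((ν^β − γ) y^β) dy = 1 / ((s+ν)^β − ν^β + γ); i.e. the Laplace transform of y ↦ e^{−ν y} y^{β−1} M_{β,β}((ν^β − γ) y^β) at s equals 1/((s+ν)^β − ν^β + γ). -/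
open MeasureTheory

/-- For `β ∈ (0,1)`, `ν > 0`, `γ > 0` and `s > 0` with
`(s+ν)^β > |ν^β − γ|`, the Laplace transform of
`y ↦ e^{−ν y} y^{β−1} M_{β,β}((ν^β − γ) y^β)` at `s` equals `1/((s+ν)^β − ν^β + γ)`. -/
theorem laplace_transform_tempered_ML
    (β ν γ s : ℝ) (hβ : β ∈ Set.Ioo (0 : ℝ) 1) (hν : 0 < ν) (hγ : 0 < γ) (hs : 0 < s)
    (hdom : |ν ^ β - γ| < (s + ν) ^ β) :
    ∫ y in Set.Ioi (0 : ℝ),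
        Real.exp (-s * y) *
          (Real.exp (-ν * y) * y ^ (β - 1) * ML β β ((ν ^ β - γ) * y ^ β)) =
      1 / ((s + ν) ^ β - ν ^ β + γ) := by
  obtain ⟨hβ0, -⟩ := hβ
  set c : ℝ := ν ^ β - γ with hc
  have hp : 0 < s + ν := by positivity
  have hP : 0 < (s + ν) ^ β := Real.rpow_pos_of_pos hp _
  have ha : ∀ n : ℕ, 0 < β * n + β := fun n => by positivity
  -- the integral of a single term
  have hint : ∀ (d : ℝ) (n : ℕ), ∫ y in Set.Ioi (0 : ℝ), d ^ n / Real.Gamma (β * n + β) *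
      (y ^ (β * n + β - 1) * Real.exp (-((s + ν) * y))) =
      (d / (s + ν) ^ β) ^ n * ((s + ν) ^ β)⁻¹ := by
    intro d n
    have hG := (Real.Gamma_pos_of_pos (ha n)).ne'
    rw [integral_const_mul, Real.integral_rpow_mul_exp_neg_mul_Ioi (ha n) hp, one_div,
      Real.inv_rpow hp.le, Real.rpow_add hp, Real.rpow_mul hp.le, Real.rpow_natCast, div_pow]
    field_simp
  have hratio : ‖c / (s + ν) ^ β‖ < 1 := by
    rw [Real.norm_eq_abs, abs_div, abs_of_pos hP, div_lt_one hP]; exact hdom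
  have hsum := hasSum_integral_of_summable_integral_norm
    (μ := volume.restrict (Set.Ioi (0 : ℝ)))
    (F := fun (n : ℕ) (y : ℝ) => c ^ n / Real.Gamma (β * n + β) *
      (y ^ (β * n + β - 1) * Real.exp (-((s + ν) * y)))) ?_ ?_
  · have hgeo := (hasSum_geometric_of_norm_lt_one hratio).mul_right ((s + ν) ^ β)⁻¹
    simp only [hint] at hsum
    have heq := hsum.unique hgeo
    have hne : (s + ν) ^ β - c ≠ 0 := by
      have := le_abs_self c
      linarith
    calc _ = _ := ?_
      _ = _ := heq
      _ = _ := ?_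
    · refine setIntegral_congr_fun measurableSet_Ioi fun y hy => ?_
      have hy0 : (0 : ℝ) < y := hy
      simp only [ML]
      rw [← tsum_mul_left, ← tsum_mul_left]
      refine tsum_congr fun n => ?_
      rw [show β * (n : ℝ) + β - 1 = β * n + (β - 1) by ring, Real.rpow_add hy0,
        Real.rpow_mul hy0.le, Real.rpow_natCast, mul_pow,
        show -((s + ν) * y) = -s * y + -ν * y by ring, Real.exp_add]
      ring
    · rw [show (s + ν) ^ β - ν ^ β + γ = (s + ν) ^ β - c by rw [hc]; ring, ← mul_inv, one_div]
      congr 1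
      field_simp
  · intro n
    have h := integrableOn_rpow_mul_exp_neg_mul_rpow (p := 1) (s := β * n + β - 1) (b := s + ν)
      (by linarith [ha n]) one_pos hp
    simp only [Real.rpow_one, neg_mul] at h
    exact h.const_mul _
  · have hr' : ‖|c| / (s + ν) ^ β‖ < 1 := by
      rw [Real.norm_eq_abs, abs_div, abs_abs, abs_of_pos hP, div_lt_one hP]; exact hdom
    refine ((hasSum_geometric_of_norm_lt_one hr').mul_right ((s + ν) ^ β)⁻¹).summable.congr ?_
    intro n
    rw [← hint]
    refine setIntegral_congr_fun measurableSet_Ioi fun y hy => ?_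
    have hy0 : (0 : ℝ) < y := hy
    simp only [norm_mul, norm_div, norm_pow, Real.norm_eq_abs, Real.abs_exp,
      abs_of_pos (Real.Gamma_pos_of_pos (ha n)), abs_of_pos (Real.rpow_pos_of_pos hy0 _)]
end

section
/- Let β ∈ (0,1), ν > 0, γ > 0, and set f(s) = (s+ν)^β − ν^β. For every s > 0 with (s+ν)^β > |ν^β − γ|, the function Φ_γ(t) = 1 − γ e^{−νt} Σ_{m=0}^∞ ν^m t^{β+m} M_{β, β+m+1}((ν^β − γ) t^β) satisfies ∫_0^∞ e^{−s t} Φ_γ(t) dt = f(s) / ( s (γ + f(s)) ). -/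
open MeasureTheory

/-- `Φ_γ(t) = 1 − γ e^{−νt} Σ_{m=0}^∞ ν^m t^{β+m} M_{β, β+m+1}((ν^β − γ) t^β)`. -/
noncomputable def Phi (β ν γ t : ℝ) : ℝ :=
  1 - γ * Real.exp (-ν * t) *
      ∑' m : ℕ, ν ^ m * t ^ (β + (m : ℝ)) * ML β (β + m + 1) ((ν ^ β - γ) * t ^ β)


/-- Summable integrals of norms give almost everywhere absolute summability. -/
theorem aux_ae_summable {ι : Type*} [Countable ι] {μ : Measure ℝ} {F : ι → ℝ → ℝ}
    (hF_int : ∀ i : ι, Integrable (F i) μ) (hF_sum : Summable fun i ↦ ∫ a, ‖F i a‖ ∂μ) :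
    ∀ᵐ a ∂μ, Summable (fun i ↦ F i a) := by
  have key : ∀ᵐ a ∂μ, Summable (fun i ↦ ‖F i a‖) := by
    apply summable_norm_of_tsum_eLpNorm_ne_top le_rfl (fun i => (hF_int i).1)
    have h (i : ι) : eLpNorm (F i) 1 μ = ‖∫ a, ‖F i a‖ ∂μ‖ₑ := by
      rw [eLpNorm_one_eq_lintegral_enorm, ← ofReal_integral_norm_eq_lintegral_enorm (hF_int i),
        Real.enorm_of_nonneg (integral_nonneg (fun a ↦ norm_nonneg (F i a)))]
    rw [funext h]
    exact tsum_enorm_ne_top_iff_summable_norm.2 hF_sum.norm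
  filter_upwards [key] with a ha using ha.of_norm

/-- The individual terms of the double series. -/
noncomputable def auxF (β ν c S : ℝ) (p : ℕ × ℕ) (t : ℝ) : ℝ :=
  (ν ^ p.1 * c ^ p.2 / Real.Gamma (β * p.2 + (β + p.1 + 1))) *
    (t ^ (β + p.1 + β * p.2) * Real.exp (-S * t))

theorem auxF_integrable (β ν c S : ℝ) (hβ : 0 < β) (hS : 0 < S) (p : ℕ × ℕ) :
    Integrable (auxF β ν c S p) (volume.restrict (Set.Ioi 0)) := by
  have h := integrableOn_rpow_mul_exp_neg_mul_rpow (p := 1) (s := β + p.1 + β * p.2) (b := S)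
    (by have : 0 ≤ β + p.1 + β * p.2 := by positivity
        linarith) one_pos hS
  simp only [Real.rpow_one] at h
  exact Integrable.const_mul h _

theorem auxF_integral (β ν c S : ℝ) (hβ : 0 < β) (hS : 0 < S) (p : ℕ × ℕ) :
    ∫ t in Set.Ioi (0 : ℝ), auxF β ν c S p t =
      (S ^ (-(β + 1)) * (ν / S) ^ p.1) * (c / S ^ β) ^ p.2 := by
  have h := integral_rpow_mul_exp_neg_mul_rpow (p := 1) (q := β + p.1 + β * p.2) (b := S)
    one_pos (by have : 0 ≤ β + p.1 + β * p.2 := by positivity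
                linarith) hS
  simp only [Real.rpow_one, div_one, mul_one] at h
  unfold auxF
  rw [integral_const_mul, h]
  have hG : Real.Gamma (β * p.2 + (β + p.1 + 1)) ≠ 0 :=
    (Real.Gamma_pos_of_pos (by positivity)).ne'
  rw [show β + p.1 + β * p.2 + 1 = β * p.2 + (β + p.1 + 1) by ring]
  have e : S ^ (-(β * p.2 + (β + p.1 + 1))) = S ^ (-(β + 1)) / S ^ p.1 / (S ^ β) ^ p.2 := by
    rw [← Real.rpow_natCast, ← Real.rpow_natCast, ← Real.rpow_mul hS.le,
      ← Real.rpow_sub hS, ← Real.rpow_sub hS]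
    congr 1; ring
  rw [e, div_pow, div_pow]
  have : S ^ β ≠ 0 := (Real.rpow_pos_of_pos hS _).ne'
  field_simp

theorem auxF_norm (β ν c S : ℝ) (hβ : 0 < β) (hν : 0 < ν) (p : ℕ × ℕ) (t : ℝ)
    (ht : 0 < t) : ‖auxF β ν c S p t‖ = auxF β ν |c| S p t := by
  have hG : 0 < Real.Gamma (β * p.2 + (β + p.1 + 1)) := Real.Gamma_pos_of_pos (by positivity)
  unfold auxF
  rw [norm_mul, norm_div, norm_mul, norm_pow, norm_pow, Real.norm_of_nonneg hν.le,
    Real.norm_of_nonneg hG.le, Real.norm_eq_abs c,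
    Real.norm_of_nonneg (show 0 ≤ t ^ (β + p.1 + β * p.2) * Real.exp (-S * t) by positivity)]

theorem aux_summable (β ν c S : ℝ) (hν : 0 < ν) (hS : ν < S) (hc : |c| < S ^ β) :
    Summable (fun p : ℕ × ℕ => (S ^ (-(β + 1)) * (ν / S) ^ p.1) * (c / S ^ β) ^ p.2) ∧
    ∑' p : ℕ × ℕ, (S ^ (-(β + 1)) * (ν / S) ^ p.1) * (c / S ^ β) ^ p.2 =
      1 / ((S - ν) * (S ^ β - c)) := by
  have hS0 : 0 < S := hν.trans hS
  have hSb : 0 < S ^ β := Real.rpow_pos_of_pos hS0 _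
  have h1 : |ν / S| < 1 := by
    rw [abs_of_pos (by positivity), div_lt_one hS0]; exact hS
  have h2 : |c / S ^ β| < 1 := by
    rw [abs_div, abs_of_pos hSb, div_lt_one hSb]; exact hc
  have s1 : Summable (fun m : ℕ => S ^ (-(β + 1)) * (ν / S) ^ m) :=
    (summable_geometric_of_abs_lt_one h1).mul_left _
  have s2 := summable_geometric_of_abs_lt_one h2
  refine ⟨summable_mul_of_summable_norm s1.norm s2.norm, ?_⟩
  rw [← tsum_mul_tsum_of_summable_norm s1.norm s2.norm, tsum_mul_left,
    tsum_geometric_of_abs_lt_one h1, tsum_geometric_of_abs_lt_one h2, Real.rpow_neg hS0.le,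
    Real.rpow_add hS0, Real.rpow_one]
  have a1 : S - ν ≠ 0 := by linarith
  have a2 : S ^ β - c ≠ 0 := by have := le_abs_self c; linarith
  have a3 : 1 - ν / S ≠ 0 := by have := lt_of_abs_lt h1; linarith
  have a4 : 1 - c / S ^ β ≠ 0 := by have := lt_of_abs_lt h2; linarith
  have b1 : 1 - ν / S = (S - ν) / S := by field_simp
  have b2 : 1 - c / S ^ β = (S ^ β - c) / S ^ β := by field_simp
  rw [b1, b2]
  field_simp

/-- For `β ∈ (0,1)`, `ν > 0`, `γ > 0`, `f(s) = (s+ν)^β − ν^β`, and every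
`s > 0` with `(s+ν)^β > |ν^β − γ|`, one has
`∫_0^∞ e^{−st} Φ_γ(t) dt = f(s)/(s(γ + f(s)))`. -/
theorem laplace_transform_Phi
    (β ν γ : ℝ) (hβ : β ∈ Set.Ioo (0 : ℝ) 1) (hν : 0 < ν) (hγ : 0 < γ)
    (f : ℝ → ℝ) (hf : ∀ s : ℝ, f s = (s + ν) ^ β - ν ^ β)
    (s : ℝ) (hs : 0 < s) (hdom : |ν ^ β - γ| < (s + ν) ^ β) :
    ∫ t in Set.Ioi (0 : ℝ), Real.exp (-s * t) * Phi β ν γ t =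
      f s / (s * (γ + f s)) := by
  obtain ⟨hβ0, hβ1⟩ := hβ
  have hS : ν < s + ν := by linarith
  have hS0 : 0 < s + ν := by linarith
  set S := s + ν with hSdef
  set c := ν ^ β - γ with hcdef
  have hint : ∀ p, Integrable (auxF β ν c S p) (volume.restrict (Set.Ioi 0)) :=
    auxF_integrable β ν c S hβ0 hS0
  have hsum : Summable fun p ↦ ∫ t in Set.Ioi (0 : ℝ), ‖auxF β ν c S p t‖ := by
    refine (aux_summable β ν |c| S hν hS (by rwa [abs_abs])).1.congr fun p => ?_
    rw [← auxF_integral β ν |c| S hβ0 hS0 p]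
    exact setIntegral_congr_fun measurableSet_Ioi
      fun t ht => (auxF_norm β ν c S hβ0 hν p t ht).symm
  have hval : ∫ t in Set.Ioi (0 : ℝ), ∑' p, auxF β ν c S p t = 1 / (s * (S ^ β - c)) := by
    rw [← integral_tsum_of_summable_integral_norm hint hsum,
      tsum_congr (auxF_integral β ν c S hβ0 hS0), (aux_summable β ν c S hν hS hdom).2,
      show S - ν = s by simp [hSdef]]
  have hpos : 0 < S ^ β - c := by have := le_abs_self c; linarith
  have hI : Integrable (fun t => ∑' p, auxF β ν c S p t) (volume.restrict (Set.Ioi 0)) := by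
    apply Integrable.of_integral_ne_zero
    rw [hval]
    positivity
  have hE : Integrable (fun t => Real.exp (-s * t)) (volume.restrict (Set.Ioi 0)) :=
    integrableOn_exp_mul_Ioi (by linarith) 0
  have hae : ∀ᵐ t ∂(volume.restrict (Set.Ioi (0 : ℝ))),
      Real.exp (-s * t) * Phi β ν γ t =
        Real.exp (-s * t) - γ * ∑' p, auxF β ν c S p t := by
    filter_upwards [aux_ae_summable hint hsum, ae_restrict_mem measurableSet_Ioi] with t hst ht
    have ht0 : 0 < t := ht
    rw [hst.tsum_prod]
    unfold Phi ML
    rw [← hcdef, mul_sub, mul_one]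
    congr 1
    rw [show Real.exp (-s * t) * (γ * Real.exp (-ν * t) *
      ∑' m : ℕ, ν ^ m * t ^ (β + (m : ℝ)) *
        ∑' n : ℕ, (c * t ^ β) ^ n / Real.Gamma (β * n + (β + m + 1))) =
      γ * ((Real.exp (-s * t) * Real.exp (-ν * t)) *
      ∑' m : ℕ, ν ^ m * t ^ (β + (m : ℝ)) *
        ∑' n : ℕ, (c * t ^ β) ^ n / Real.Gamma (β * n + (β + m + 1))) by ring,
      ← Real.exp_add, show -s * t + -ν * t = -S * t by rw [hSdef]; ring, ← tsum_mul_left]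
    congr 1
    refine tsum_congr fun m => ?_
    rw [← mul_assoc, ← tsum_mul_left]
    refine tsum_congr fun n => ?_
    unfold auxF
    simp only
    rw [mul_pow, Real.rpow_add ht0 (β + m) (β * n), Real.rpow_mul ht0.le β n, Real.rpow_natCast]
    ring
  rw [integral_congr_ae hae, integral_sub hE (hI.const_mul γ), integral_const_mul, hval,
    integral_exp_mul_Ioi (by linarith) 0, hf]
  have hγf : γ + (S ^ β - ν ^ β) = S ^ β - c := by rw [hcdef]; ring
  rw [hγf, mul_zero, Real.exp_zero]
  have : S ^ β - ν ^ β = S ^ β - c - γ := by rw [hcdef]; ring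
  rw [this]
  have h1 := hpos.ne'
  field_simp
end
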